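/- Let p : Ω → Λ be a connected covering of k-graphs, x a vertex of Λ, and v a vertex of Ω with p(v) = x. Then the following are equivalent: (i) the subgroup p_*π(Ω,v) of π(Λ,x) is normal; (ii) the automorphism group Aut(Ω,p) acts transitively on p⁻¹(x); (iii) the induced covering Ω/Aut(Ω,p) → Λ is an isomorphism of k-graphs; (iv) the covering (Ω,p) is isomorphic to the quotient covering Ω → Ω/Aut(Ω,p). -/

import Mathlib

/-!
Arrows-only formalization of `k`-graphs (higher-rank graphs), their coverings,
fundamental groupoids, and groupoid actions, following Pask–Quigg–Raeburn,
"Coverings of k-graphs".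

A small category is encoded by its set of arrows `A` together with
source/range maps `src rng : A → A` (whose common image is the set of
identities = vertices) and a (guarded) total composition `comp : A → A → A`,
where `comp f g` is the composite "f after g", meaningful when `src f = rng g`.
A `k`-graph additionally has a degree map `deg : A → (Fin k → ℕ)` which is
functorial and satisfies the unique factorization property.
-/

namespace KGraphCovering

/-- A `k`-graph in arrows-only form. -/
structure KGraphStruct (k : ℕ) (A : Type) : Type where
  src : A → A
  rng : A → A
  comp : A → A → A
  deg : A → (Fin k → ℕ)
  src_src : ∀ f, src (src f) = src f
  rng_src : ∀ f, rng (src f) = src f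
  src_rng : ∀ f, src (rng f) = rng f
  rng_rng : ∀ f, rng (rng f) = rng f
  comp_src_id : ∀ f, comp f (src f) = f
  rng_comp_id : ∀ f, comp (rng f) f = f
  src_comp : ∀ f g, src f = rng g → src (comp f g) = src g
  rng_comp : ∀ f g, src f = rng g → rng (comp f g) = rng f
  assoc : ∀ f g h, src f = rng g → src g = rng h →
    comp (comp f g) h = comp f (comp g h)
  deg_comp : ∀ f g, src f = rng g → deg (comp f g) = deg f + deg g
  deg_src : ∀ f, deg (src f) = 0
  factor : ∀ f m n, deg f = m + n →
    ∃! q : A × A, src q.1 = rng q.2 ∧ deg q.1 = m ∧ deg q.2 = n ∧ comp q.1 q.2 = f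

namespace KGraphStruct

variable {k : ℕ} {A : Type}

/-- The vertices (objects) are the identity arrows. -/
def IsVertex (S : KGraphStruct k A) (v : A) : Prop := S.src v = v

/-- A `k`-graph is connected if the equivalence relation generated by
"there is a morphism from `v` to `u`" relates all pairs of vertices. -/
def Connected (S : KGraphStruct k A) : Prop :=
  ∀ u v, S.IsVertex u → S.IsVertex v →
    Relation.EqvGen (fun a b => ∃ f, S.rng f = a ∧ S.src f = b) u v

end KGraphStruct

/-- A groupoid in arrows-only form. -/
structure GroupoidStruct (B : Type) : Type where
  src : B → B
  rng : B → B
  comp : B → B → B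
  inv : B → B
  src_src : ∀ f, src (src f) = src f
  rng_src : ∀ f, rng (src f) = src f
  src_rng : ∀ f, src (rng f) = rng f
  rng_rng : ∀ f, rng (rng f) = rng f
  comp_src_id : ∀ f, comp f (src f) = f
  rng_comp_id : ∀ f, comp (rng f) f = f
  src_comp : ∀ f g, src f = rng g → src (comp f g) = src g
  rng_comp : ∀ f g, src f = rng g → rng (comp f g) = rng f
  assoc : ∀ f g h, src f = rng g → src g = rng h →
    comp (comp f g) h = comp f (comp g h)
  src_inv : ∀ f, src (inv f) = rng f
  rng_inv : ∀ f, rng (inv f) = src f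
  inv_comp_self : ∀ f, comp (inv f) f = src f
  comp_inv_self : ∀ f, comp f (inv f) = rng f

namespace GroupoidStruct

variable {B : Type}

/-- The vertices (objects) of a groupoid are the identity arrows. -/
def IsVertex (G : GroupoidStruct B) (v : B) : Prop := G.src v = v

/-- A subgroup of the isotropy group `x𝒢x`, as a set of arrows. -/
def IsSubgroupAt (G : GroupoidStruct B) (x : B) (H : Set B) : Prop :=
  (∀ a ∈ H, G.src a = x ∧ G.rng a = x) ∧ x ∈ H ∧
  (∀ a ∈ H, ∀ b ∈ H, G.comp a b ∈ H) ∧ (∀ a ∈ H, G.inv a ∈ H)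

/-- `K` is a conjugate of `H` in the isotropy group at `x`. -/
def ConjAt (G : GroupoidStruct B) (x : B) (H K : Set B) : Prop :=
  ∃ g, G.src g = x ∧ G.rng g = x ∧
    K = (fun a => G.comp (G.comp g a) (G.inv g)) '' H

/-- `H` is a normal subset of the isotropy group at `x`. -/
def IsNormalAt (G : GroupoidStruct B) (x : B) (H : Set B) : Prop :=
  ∀ g, G.src g = x → G.rng g = x → ∀ a ∈ H, G.comp (G.comp g a) (G.inv g) ∈ H

/-- The normalizer of `H` in the isotropy group at `x`. -/
def normalizerAt (G : GroupoidStruct B) (x : B) (H : Set B) : Set B :=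
  {g | G.src g = x ∧ G.rng g = x ∧
    (fun a => G.comp (G.comp g a) (G.inv g)) '' H = H}

end GroupoidStruct

/-- `f` is a morphism of `k`-graphs (a degree-preserving functor). -/
def IsKGraphHomFun {k : ℕ} {A A' : Type} (S : KGraphStruct k A)
    (T : KGraphStruct k A') (f : A → A') : Prop :=
  (∀ a, f (S.src a) = T.src (f a)) ∧
  (∀ a, f (S.rng a) = T.rng (f a)) ∧
  (∀ a b, S.src a = S.rng b → f (S.comp a b) = T.comp (f a) (f b)) ∧
  (∀ a, T.deg (f a) = S.deg a)

/-- `f` is a functor from a `k`-graph to a groupoid. -/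
def IsFunctorToGpdFun {k : ℕ} {A B : Type} (S : KGraphStruct k A)
    (G : GroupoidStruct B) (f : A → B) : Prop :=
  (∀ a, f (S.src a) = G.src (f a)) ∧
  (∀ a, f (S.rng a) = G.rng (f a)) ∧
  (∀ a b, S.src a = S.rng b → f (S.comp a b) = G.comp (f a) (f b))

/-- `f` is a morphism of groupoids (a functor). -/
def IsGpdHomFun {B C : Type} (G : GroupoidStruct B) (H : GroupoidStruct C)
    (f : B → C) : Prop :=
  (∀ a, f (G.src a) = H.src (f a)) ∧
  (∀ a, f (G.rng a) = H.rng (f a)) ∧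
  (∀ a b, G.src a = G.rng b → f (G.comp a b) = H.comp (f a) (f b))

/-- `p : Ω → Λ` is a covering of `k`-graphs: a surjective `k`-graph morphism
which maps `Ωv` bijectively onto `Λp(v)` and `vΩ` bijectively onto `p(v)Λ`
for every vertex `v` of `Ω`. -/
structure IsCovering {k : ℕ} {A A' : Type} (S : KGraphStruct k A')
    (T : KGraphStruct k A) (p : A' → A) : Prop where
  hom : IsKGraphHomFun S T p
  surj : Function.Surjective p
  src_inj : ∀ a b, S.src a = S.src b → p a = p b → a = b
  src_lift : ∀ v, S.IsVertex v → ∀ g, T.src g = p v → ∃ a, S.src a = v ∧ p a = g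
  rng_inj : ∀ a b, S.rng a = S.rng b → p a = p b → a = b
  rng_lift : ∀ v, S.IsVertex v → ∀ g, T.rng g = p v → ∃ a, S.rng a = v ∧ p a = g

/-- A fundamental groupoid of a `k`-graph `S`: a groupoid `G` whose object
set is identified with the vertex set of `S` via the canonical functor `i`
(which is bijective on objects), with the universal property that every
functor from `S` to a groupoid factors uniquely through `i`. -/
structure FundamentalGroupoid {k : ℕ} {A : Type} (S : KGraphStruct k A) :
    Type 1 where
  B : Type
  G : GroupoidStruct B
  i : A → B
  i_hom : IsFunctorToGpdFun S G i
  obj_bij : ∀ w, G.IsVertex w → ∃! v, S.IsVertex v ∧ i v = w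
  univ : ∀ {C : Type} (H : GroupoidStruct C) (F : A → C),
    IsFunctorToGpdFun S H F →
    ∃! F' : B → C, IsGpdHomFun G H F' ∧ ∀ a, F' (i a) = F a

/-- The fundamental group `π(Λ,x)` at a vertex `x`, as the isotropy of the
fundamental groupoid at `i x`. -/
def FundamentalGroupoid.pi1 {k : ℕ} {A : Type} {S : KGraphStruct k A}
    (F : FundamentalGroupoid S) (x : A) : Set F.B :=
  {a | F.G.src a = F.i x ∧ F.G.rng a = F.i x}

/-- An automorphism of the covering `p : Ω → Λ`. -/
def IsCoveringAut {k : ℕ} {A A' : Type} (Ω : KGraphStruct k A')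
    (Λ : KGraphStruct k A) (p : A' → A) (φ : A' → A') : Prop :=
  Function.Bijective φ ∧ IsKGraphHomFun Ω Ω φ ∧ ∀ a, p (φ a) = p a

/-- The action of the fundamental groupoid `F = 𝒢(Λ)` on the vertex set of a
covering `p : Ω → Λ`, determined by `i(p(λ)) ⬝ s(λ) = r(λ)`.  The fiber of a
vertex `w` of `Ω` is over the object `F.i (p w)`. -/
structure CorrespondingAction {k : ℕ} {A A' : Type} (Ω : KGraphStruct k A')
    (Λ : KGraphStruct k A) (F : FundamentalGroupoid Λ) (p : A' → A)
    (act : F.B → A' → A') : Prop where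
  act_vertex : ∀ a w, Ω.IsVertex w → F.G.src a = F.i (p w) →
    Ω.IsVertex (act a w) ∧ F.i (p (act a w)) = F.G.rng a
  act_id : ∀ w, Ω.IsVertex w → act (F.i (p w)) w = w
  act_comp : ∀ a b w, Ω.IsVertex w → F.G.src b = F.i (p w) →
    F.G.src a = F.G.rng b → act (F.G.comp a b) w = act a (act b w)
  act_cov : ∀ lam, act (F.i (p lam)) (Ω.src lam) = Ω.rng lam

/-- An action of a groupoid `G` on a set `V`, presented by an anchor map
`fib : V → B` (landing in vertices) and a guarded action map. -/
structure GpdActionStruct {B : Type} (G : GroupoidStruct B) (V : Type) :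
    Type where
  fib : V → B
  act : B → V → V
  fib_vertex : ∀ v, G.src (fib v) = fib v
  act_fib : ∀ a v, G.src a = fib v → fib (act a v) = G.rng a
  act_id : ∀ v, act (fib v) v = v
  act_comp : ∀ a b v, G.src b = fib v → G.src a = G.rng b →
    act (G.comp a b) v = act a (act b v)

namespace GpdActionStruct

variable {B V W : Type} {G : GroupoidStruct B}

/-- Transitivity of a groupoid action. -/
def Transitive (ρ : GpdActionStruct G V) : Prop :=
  ∀ u v : V, ∃ a, G.src a = ρ.fib v ∧ ρ.act a v = u

/-- The stability group of the action at `v`. -/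
def stab (ρ : GpdActionStruct G V) (v : V) : Set B :=
  {a | G.src a = ρ.fib v ∧ G.rng a = ρ.fib v ∧ ρ.act a v = v}

/-- Freeness of a groupoid action: all stability groups are trivial. -/
def Free (ρ : GpdActionStruct G V) : Prop :=
  ∀ (v : V) (a : B), a ∈ ρ.stab v → a = ρ.fib v

end GpdActionStruct

/-- A morphism of actions of the groupoid `G`: a fiber-preserving
equivariant map. -/
def IsActionHom {B V W : Type} {G : GroupoidStruct B}
    (ρ : GpdActionStruct G V) (σ : GpdActionStruct G W) (φ : V → W) : Prop :=
  (∀ v, σ.fib (φ v) = ρ.fib v) ∧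
  ∀ a v, G.src a = ρ.fib v → φ (ρ.act a v) = σ.act a (φ v)

/-- An automorphism of an action of the groupoid `G`. -/
def IsActionAut {B V : Type} {G : GroupoidStruct B}
    (ρ : GpdActionStruct G V) (φ : V → V) : Prop :=
  Function.Bijective φ ∧ IsActionHom ρ ρ φ

/-- A universal covering: a connected covering admitting a morphism of
coverings to every connected covering of the base. -/
def IsUniversalCovering {k : ℕ} {A A' : Type} (Ω : KGraphStruct k A')
    (Λ : KGraphStruct k A) (p : A' → A) : Prop :=
  IsCovering Ω Λ p ∧ Ω.Connected ∧
  ∀ (A'' : Type) (Sg : KGraphStruct k A'') (q : A'' → A),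
    IsCovering Sg Λ q → Sg.Connected →
    ∃ φ : A' → A'', IsKGraphHomFun Ω Sg φ ∧ ∀ a, q (φ a) = p a

end KGraphCovering

namespace KGraphCovering

namespace GroupoidStruct

variable {B : Type} (G : GroupoidStruct B)

theorem inv_unique {f g : B} (h1 : G.src g = G.rng f) (h3 : G.comp g f = G.src f) :
    g = G.inv f := by
  have e := G.assoc g f (G.inv f) h1 (G.rng_inv f).symm
  rw [h3, G.comp_inv_self, ← h1, G.comp_src_id, ← G.rng_inv, G.rng_comp_id] at e
  exact e.symm

theorem inv_inv' (f : B) : G.inv (G.inv f) = f := by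
  symm
  apply G.inv_unique
  · rw [G.rng_inv]
  · rw [G.comp_inv_self, G.src_inv]

theorem cancel_left (f g : B) (h : G.rng f = G.rng g) :
    G.comp f (G.comp (G.inv f) g) = g := by
  rw [← G.assoc _ _ _ (G.rng_inv f).symm (by rw [G.src_inv, h]), G.comp_inv_self, h,
    G.rng_comp_id]

theorem cancel_right (f g : B) (h : G.src f = G.src g) :
    G.comp (G.comp f (G.inv g)) g = f := by
  rw [G.assoc _ _ _ (by rw [G.rng_inv, h]) (G.src_inv g), G.inv_comp_self, ← h,
    G.comp_src_id]

/-- Conjugating by `h⁻¹` and then by `h` gives back the original loop. -/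
theorem conj_conj (h g : B) (h1 : G.src g = G.rng h) (h2 : G.rng g = G.rng h) :
    G.comp (G.comp h (G.comp (G.comp (G.inv h) g) h)) (G.inv h) = g := by
  have e1 : G.src (G.inv h) = G.rng g := by rw [G.src_inv, h2]
  have e2 : G.src (G.comp (G.inv h) g) = G.rng h := by rw [G.src_comp _ _ e1, h1]
  have e3 : G.rng (G.comp (G.inv h) g) = G.src h := by rw [G.rng_comp _ _ e1, G.rng_inv]
  rw [← G.assoc _ _ _ e3.symm e2, G.cancel_left _ _ h2.symm]
  have := G.cancel_right g (G.inv h) (by rw [G.src_inv, h1])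
  rwa [G.inv_inv'] at this

end GroupoidStruct

theorem gpdHom_inv {B C : Type} {G : GroupoidStruct B} {H : GroupoidStruct C} {f : B → C}
    (hf : IsGpdHomFun G H f) (a : B) : f (G.inv a) = H.inv (f a) := by
  apply H.inv_unique
  · rw [← hf.1, ← hf.2.1, G.src_inv]
  · rw [← hf.2.2 _ _ (G.src_inv a), G.inv_comp_self, hf.1]

open Classical in
/-- The subgroupoid of arrows satisfying a closed predicate. -/
noncomputable def subGpd {B : Type} (G : GroupoidStruct B) (P : B → Prop)
    (hc : ∀ f g, G.src f = G.rng g → P f → P g → P (G.comp f g))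
    (hi : ∀ f, P f → P (G.inv f)) : GroupoidStruct {b // P b} where
  src f := ⟨G.src f.1, by
    rw [← G.inv_comp_self]; exact hc _ _ (G.src_inv _) (hi _ f.2) f.2⟩
  rng f := ⟨G.rng f.1, by
    rw [← G.comp_inv_self]; exact hc _ _ (G.rng_inv _).symm f.2 (hi _ f.2)⟩
  comp f g := if h : G.src f.1 = G.rng g.1 then ⟨G.comp f.1 g.1, hc _ _ h f.2 g.2⟩ else f
  inv f := ⟨G.inv f.1, hi _ f.2⟩
  src_src f := Subtype.ext (G.src_src _)
  rng_src f := Subtype.ext (G.rng_src _)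
  src_rng f := Subtype.ext (G.src_rng _)
  rng_rng f := Subtype.ext (G.rng_rng _)
  comp_src_id f := by
    rw [dif_pos (G.rng_src _).symm]; exact Subtype.ext (G.comp_src_id _)
  rng_comp_id f := by
    rw [dif_pos (G.src_rng _)]; exact Subtype.ext (G.rng_comp_id _)
  src_comp f g h := by
    have h' := congrArg Subtype.val h
    apply Subtype.ext
    simp only at h'
    simp only [dif_pos h']
    exact G.src_comp _ _ h'
  rng_comp f g h := by
    have h' := congrArg Subtype.val h
    apply Subtype.ext
    simp only at h'
    simp only [dif_pos h']
    exact G.rng_comp _ _ h'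
  assoc f g h h1 h2 := by
    have h1' := congrArg Subtype.val h1
    have h2' := congrArg Subtype.val h2
    simp only at h1' h2'
    apply Subtype.ext
    simp only [dif_pos h1', dif_pos h2', G.src_comp _ _ h1', G.rng_comp _ _ h2']
    exact G.assoc _ _ _ h1' h2'
  src_inv f := Subtype.ext (G.src_inv _)
  rng_inv f := Subtype.ext (G.rng_inv _)
  inv_comp_self f := by
    rw [dif_pos (G.src_inv _)]; exact Subtype.ext (G.inv_comp_self _)
  comp_inv_self f := by
    rw [dif_pos (G.rng_inv _).symm]; exact Subtype.ext (G.comp_inv_self _)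

namespace FundamentalGroupoid

variable {k : ℕ} {A : Type} {S : KGraphStruct k A} (F : FundamentalGroupoid S)

/-- The fundamental groupoid is generated by the image of the graph. -/
theorem induct (P : F.B → Prop) (h0 : ∀ a, P (F.i a))
    (hc : ∀ f g, F.G.src f = F.G.rng g → P f → P g → P (F.G.comp f g))
    (hi : ∀ f, P f → P (F.G.inv f)) (b : F.B) : P b := by
  obtain ⟨F', ⟨hF, hFi⟩, -⟩ := F.univ (subGpd F.G P hc hi) (fun a => ⟨F.i a, h0 a⟩)
    ⟨fun a => Subtype.ext (F.i_hom.1 a), fun a => Subtype.ext (F.i_hom.2.1 a),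
      fun a b h => by
        have h' : F.G.src (F.i a) = F.G.rng (F.i b) := by
          rw [← F.i_hom.1, ← F.i_hom.2.1, h]
        apply Subtype.ext
        simp only [subGpd, dif_pos h']
        exact F.i_hom.2.2 a b h⟩
  have key : (fun b => (F' b).1) = id := by
    refine (F.univ F.G F.i F.i_hom).unique ⟨⟨fun a => ?_, fun a => ?_, fun a b h => ?_⟩, ?_⟩
      ⟨⟨fun _ => rfl, fun _ => rfl, fun _ _ _ => rfl⟩, fun _ => rfl⟩
    · exact congrArg Subtype.val (hF.1 a)
    · exact congrArg Subtype.val (hF.2.1 a)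
    · have h' : F.G.src (F' a).1 = F.G.rng (F' b).1 := by
        have e1 := congrArg Subtype.val (hF.1 a)
        have e2 := congrArg Subtype.val (hF.2.1 b)
        have e3 := congrArg (fun z => (F' z).1) h
        exact e1.symm.trans (e3.trans e2)
      have e := congrArg Subtype.val (hF.2.2 a b h)
      simp only [subGpd, dif_pos h'] at e
      exact e
    · intro a
      exact congrArg Subtype.val (hFi a)
  have e := congrFun key b
  simp only [id] at e
  rw [← e]
  exact (F' b).2

theorem src_i {v : A} (hv : S.IsVertex v) : F.G.src (F.i v) = F.i v := by
  rw [← F.i_hom.1, hv]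

theorem i_inj {v w : A} (hv : S.IsVertex v) (hw : S.IsVertex w) (h : F.i v = F.i w) :
    v = w :=
  (F.obj_bij (F.i w) (F.src_i hw)).unique ⟨hv, h⟩ ⟨hw, rfl⟩

theorem exists_src (b : F.B) : ∃ v, S.IsVertex v ∧ F.G.src b = F.i v := by
  obtain ⟨v, ⟨h1, h2⟩, -⟩ := F.obj_bij (F.G.src b) (F.G.src_src b)
  exact ⟨v, h1, h2.symm⟩

theorem exists_rng (b : F.B) : ∃ v, S.IsVertex v ∧ F.G.rng b = F.i v := by
  obtain ⟨v, ⟨h1, h2⟩, -⟩ := F.obj_bij (F.G.rng b) (F.G.src_rng b)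
  exact ⟨v, h1, h2.symm⟩

end FundamentalGroupoid

namespace KGraphStruct
variable {k : ℕ} {A : Type} (S : KGraphStruct k A)

theorem vsrc (a : A) : S.IsVertex (S.src a) := S.src_src a
theorem vrng (a : A) : S.IsVertex (S.rng a) := S.src_rng a
theorem IsVertex.rng_eq {S : KGraphStruct k A} {a : A} (h : S.IsVertex a) : S.rng a = a := by
  have e : S.src a = a := h
  have := S.rng_src a
  rwa [e] at this

end KGraphStruct

theorem IsKGraphHomFun.vertex {k : ℕ} {A A' : Type} {S : KGraphStruct k A}
    {T : KGraphStruct k A'} {f : A → A'} (hf : IsKGraphHomFun S T f) {v : A}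
    (hv : S.IsVertex v) : T.IsVertex (f v) := by
  have e : S.src v = v := hv
  show T.src (f v) = f v
  rw [← hf.1, e]

/-- Partial bijections of a set, as relations. -/
def PB (V : Type) : Type :=
  {R : V → V → Prop // (∀ a b c, R a b → R a c → b = c) ∧ ∀ a b c, R a c → R b c → a = b}

theorem PB.ext' {V : Type} {R S : PB V} (h : ∀ a b, R.1 a b ↔ S.1 a b) : R = S :=
  Subtype.ext (funext fun a => funext fun b => propext (h a b))

/-- The groupoid of partial bijections of a set. -/
def pbGpd (V : Type) : GroupoidStruct (PB V) where
  src R := ⟨fun a a' => a = a' ∧ ∃ b, R.1 a b, by grind, by grind⟩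
  rng R := ⟨fun a a' => a = a' ∧ ∃ b, R.1 b a, by grind, by grind⟩
  comp R S := ⟨fun a c => ∃ b, S.1 a b ∧ R.1 b c, by
    have h1 := R.2; have h2 := S.2; grind, by
    have h1 := R.2; have h2 := S.2; grind⟩
  inv R := ⟨fun a b => R.1 b a, by have h1 := R.2; grind, by have h1 := R.2; grind⟩
  src_src R := PB.ext' (by grind)
  rng_src R := PB.ext' (by grind)
  src_rng R := PB.ext' (by grind)
  rng_rng R := PB.ext' (by grind)
  comp_src_id R := PB.ext' (by grind)
  rng_comp_id R := PB.ext' (by grind)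
  src_comp R S h := PB.ext' (by
    intro a b
    have h' := fun a => congrFun (congrFun (congrArg Subtype.val h) a) a
    simp at h'
    constructor
    · rintro ⟨rfl, c, d, h1, h2⟩
      exact ⟨rfl, d, h1⟩
    · rintro ⟨rfl, d, h1⟩
      obtain ⟨c, h2⟩ := (h' d).2 ⟨_, h1⟩
      exact ⟨rfl, c, d, h1, h2⟩)
  rng_comp R S h := PB.ext' (by
    intro a b
    have h' := fun a => congrFun (congrFun (congrArg Subtype.val h) a) a
    simp at h'
    grind)
  assoc R S T _ _ := PB.ext' (by grind)
  src_inv R := PB.ext' (by grind)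
  rng_inv R := PB.ext' (by grind)
  inv_comp_self R := PB.ext' (by have h1 := R.2; grind)
  comp_inv_self R := PB.ext' (by have h1 := R.2; grind)

section

variable {k : ℕ} {A A' : Type} {Λ : KGraphStruct k A} {Ω : KGraphStruct k A'}
  {FΛ : FundamentalGroupoid Λ} {FΩ : FundamentalGroupoid Ω} {p : A' → A}
  {pst : FΩ.B → FΛ.B}

/-- The partial bijection of the vertices given by lifting an arrow. -/
def liftPB (hp : IsCovering Ω Λ p) (l : A) : PB A' :=
  ⟨fun a b => ∃ m, p m = l ∧ Ω.src m = a ∧ Ω.rng m = b, by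
    rintro _ _ _ ⟨m, h1, rfl, rfl⟩ ⟨n, h2, h3, rfl⟩
    rw [hp.src_inj m n h3.symm (h1.trans h2.symm)], by
    rintro _ _ _ ⟨m, h1, rfl, rfl⟩ ⟨n, h2, rfl, h3⟩
    rw [hp.rng_inj m n h3.symm (h1.trans h2.symm)]⟩

theorem liftPB_functor (hp : IsCovering Ω Λ p) :
    IsFunctorToGpdFun Λ (pbGpd A') (liftPB hp) := by
  refine ⟨fun l => PB.ext' fun a b => ?_, fun l => PB.ext' fun a b => ?_,
    fun l l' h => PB.ext' fun a b => ?_⟩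
  · constructor
    · rintro ⟨m, h1, rfl, rfl⟩
      have hm : m = Ω.src m := by
        apply hp.src_inj
        · rw [Ω.src_src]
        · rw [hp.hom.1, h1, Λ.src_src]
      obtain ⟨n, hn1, hn2⟩ := hp.src_lift (Ω.src m) (Ω.vsrc m) l (by rw [← hm, h1])
      refine ⟨?_, _, n, hn2, hn1, rfl⟩
      conv_rhs => rw [hm, Ω.rng_src]
    · rintro ⟨rfl, _, m, h1, rfl, rfl⟩
      exact ⟨Ω.src m, by rw [hp.hom.1, h1], Ω.src_src m, Ω.rng_src m⟩
  · constructor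
    · rintro ⟨m, h1, rfl, rfl⟩
      have hm : m = Ω.src m := by
        apply hp.src_inj
        · rw [Ω.src_src]
        · rw [hp.hom.1, h1, Λ.src_rng]
      obtain ⟨n, hn1, hn2⟩ := hp.rng_lift (Ω.src m) (Ω.vsrc m) l (by rw [← hm, h1])
      refine ⟨?_, _, n, hn2, rfl, hn1⟩
      conv_rhs => rw [hm, Ω.rng_src]
    · rintro ⟨rfl, _, m, h1, rfl, rfl⟩
      exact ⟨Ω.rng m, by rw [hp.hom.2.1, h1], Ω.src_rng m, Ω.rng_rng m⟩
  · constructor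
    · rintro ⟨m, h1, rfl, rfl⟩
      obtain ⟨n, hn1, hn2⟩ := hp.src_lift (Ω.src m) (Ω.vsrc m) l' (by
        rw [hp.hom.1, h1, Λ.src_comp _ _ h])
      obtain ⟨q, hq1, hq2⟩ := hp.src_lift (Ω.rng n) (Ω.vrng n) l (by
        rw [hp.hom.2.1, hn2, h])
      have e : Ω.comp q n = m := by
        apply hp.src_inj
        · rw [Ω.src_comp _ _ hq1, hn1]
        · rw [hp.hom.2.2.1 _ _ hq1, h1, hq2, hn2]
      refine ⟨Ω.rng n, ⟨n, hn2, hn1, rfl⟩, q, hq2, hq1, ?_⟩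
      rw [← e, Ω.rng_comp _ _ hq1]
    · rintro ⟨c, ⟨n, hn, rfl, rfl⟩, q, hq, hq1, rfl⟩
      exact ⟨Ω.comp q n, by rw [hp.hom.2.2.1 _ _ hq1, hq, hn], Ω.src_comp _ _ hq1,
        Ω.rng_comp _ _ hq1⟩

/-- `g` lifts to an arrow from `u` to `w`. -/
def Tr (pst : FΩ.B → FΛ.B) (g : FΛ.B) (u w : A') : Prop :=
  ∃ b, FΩ.G.src b = FΩ.i u ∧ FΩ.G.rng b = FΩ.i w ∧ pst b = g

theorem Tr.comp (hpst : IsGpdHomFun FΩ.G FΛ.G pst) {g h : FΛ.B} {u w z : A'}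
    (h1 : Tr pst g w z) (h2 : Tr pst h u w) : Tr pst (FΛ.G.comp g h) u z := by
  obtain ⟨b, b1, b2, rfl⟩ := h1
  obtain ⟨c, c1, c2, rfl⟩ := h2
  have e : FΩ.G.src b = FΩ.G.rng c := by rw [b1, c2]
  exact ⟨FΩ.G.comp b c, by rw [FΩ.G.src_comp _ _ e, c1], by rw [FΩ.G.rng_comp _ _ e, b2],
    hpst.2.2 _ _ e⟩

theorem Tr.inv (hpst : IsGpdHomFun FΩ.G FΛ.G pst) {g : FΛ.B} {u w : A'}
    (h1 : Tr pst g u w) : Tr pst (FΛ.G.inv g) w u := by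
  obtain ⟨b, b1, b2, rfl⟩ := h1
  exact ⟨FΩ.G.inv b, by rw [FΩ.G.src_inv, b2], by rw [FΩ.G.rng_inv, b1], gpdHom_inv hpst b⟩

theorem Tr.src (hpst : IsGpdHomFun FΩ.G FΛ.G pst) (hpsti : ∀ a, pst (FΩ.i a) = FΛ.i (p a))
    {g : FΛ.B} {u w : A'} (h1 : Tr pst g u w) : FΛ.G.src g = FΛ.i (p u) := by
  obtain ⟨b, b1, b2, rfl⟩ := h1
  rw [← hpst.1, b1, hpsti]

theorem Tr.rng (hpst : IsGpdHomFun FΩ.G FΛ.G pst) (hpsti : ∀ a, pst (FΩ.i a) = FΛ.i (p a))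
    {g : FΛ.B} {u w : A'} (h1 : Tr pst g u w) : FΛ.G.rng g = FΛ.i (p w) := by
  obtain ⟨b, b1, b2, rfl⟩ := h1
  rw [← hpst.2.1, b2, hpsti]

theorem Tr.arrow (hpsti : ∀ a, pst (FΩ.i a) = FΛ.i (p a)) (a : A') :
    Tr pst (FΛ.i (p a)) (Ω.src a) (Ω.rng a) :=
  ⟨FΩ.i a, (FΩ.i_hom.1 a).symm, (FΩ.i_hom.2.1 a).symm, hpsti a⟩

/-- Unique path lifting: endpoints. -/
theorem Tr.unique (hp : IsCovering Ω Λ p) (hpst : IsGpdHomFun FΩ.G FΛ.G pst)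
    (hpsti : ∀ a, pst (FΩ.i a) = FΛ.i (p a)) {g : FΛ.B} {u w w' : A'}
    (hu : Ω.IsVertex u) (hw : Ω.IsVertex w) (hw' : Ω.IsVertex w')
    (h1 : Tr pst g u w) (h2 : Tr pst g u w') : w = w' := by
  obtain ⟨F', ⟨hF, hFi⟩, -⟩ := FΛ.univ (pbGpd A') (liftPB hp) (liftPB_functor hp)
  have key : ∀ b : FΩ.B, ∀ z z', Ω.IsVertex z → Ω.IsVertex z' → FΩ.G.src b = FΩ.i z →
      FΩ.G.rng b = FΩ.i z' → (F' (pst b)).1 z z' := by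
    intro b
    induction b using FΩ.induct with
    | h0 a =>
      intro z z' hz hz' e1 e2
      rw [← FΩ.i_hom.1] at e1
      rw [← FΩ.i_hom.2.1] at e2
      rw [hpsti, hFi]
      exact ⟨a, rfl, FΩ.i_inj (Ω.vsrc a) hz e1, FΩ.i_inj (Ω.vrng a) hz' e2⟩
    | hc f g h hf hg =>
      intro z z' hz hz' e1 e2
      rw [FΩ.G.src_comp _ _ h] at e1
      rw [FΩ.G.rng_comp _ _ h] at e2
      obtain ⟨y, hy, hy'⟩ := FΩ.exists_src f
      rw [hpst.2.2 _ _ h, hF.2.2 _ _ (by rw [← hpst.1, ← hpst.2.1, h])]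
      exact ⟨y, hg z y hz hy e1 (h ▸ hy'), hf y z' hy hz' hy' e2⟩
    | hi f hf =>
      intro z z' hz hz' e1 e2
      rw [FΩ.G.src_inv] at e1
      rw [FΩ.G.rng_inv] at e2
      rw [gpdHom_inv hpst, gpdHom_inv hF]
      exact hf z' z hz' hz e2 e1
  obtain ⟨b, b1, b2, rfl⟩ := h1
  obtain ⟨c, c1, c2, hc⟩ := h2
  have k1 := key b u w hu hw b1 b2
  have k2 := key c u w' hu hw' c1 c2
  rw [hc] at k2
  exact (F' (pst b)).2.1 _ _ _ k1 k2

/-- Path lifting. -/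
theorem Tr.lift (hp : IsCovering Ω Λ p) (hpst : IsGpdHomFun FΩ.G FΛ.G pst)
    (hpsti : ∀ a, pst (FΩ.i a) = FΛ.i (p a)) (g : FΛ.B) :
    (∀ u, Ω.IsVertex u → FΛ.G.src g = FΛ.i (p u) → ∃ w, Ω.IsVertex w ∧ Tr pst g u w) ∧
    (∀ w, Ω.IsVertex w → FΛ.G.rng g = FΛ.i (p w) → ∃ u, Ω.IsVertex u ∧ Tr pst g u w) := by
  induction g using FΛ.induct with
  | h0 l =>
    constructor
    · intro u hu e
      rw [← FΛ.i_hom.1] at e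
      obtain ⟨a, rfl, rfl⟩ := hp.src_lift u hu l
        (FΛ.i_inj (Λ.vsrc l) (hp.hom.vertex hu) e)
      exact ⟨_, Ω.vrng a, Tr.arrow hpsti a⟩
    · intro u hu e
      rw [← FΛ.i_hom.2.1] at e
      obtain ⟨a, rfl, rfl⟩ := hp.rng_lift u hu l
        (FΛ.i_inj (Λ.vrng l) (hp.hom.vertex hu) e)
      exact ⟨_, Ω.vsrc a, Tr.arrow hpsti a⟩
  | hc f g h hf hg =>
    constructor
    · intro u hu e
      rw [FΛ.G.src_comp _ _ h] at e
      obtain ⟨w, hw, t⟩ := hg.1 u hu e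
      obtain ⟨z, hz, t'⟩ := hf.1 w hw (h.trans (t.rng hpst hpsti))
      exact ⟨z, hz, t'.comp hpst t⟩
    · intro u hu e
      rw [FΛ.G.rng_comp _ _ h] at e
      obtain ⟨w, hw, t⟩ := hf.2 u hu e
      obtain ⟨z, hz, t'⟩ := hg.2 w hw (h.symm.trans (t.src hpst hpsti))
      exact ⟨z, hz, t.comp hpst t'⟩
  | hi f hf =>
    constructor
    · intro u hu e
      rw [FΛ.G.src_inv] at e
      obtain ⟨w, hw, t⟩ := hf.2 u hu e
      exact ⟨w, hw, t.inv hpst⟩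
    · intro u hu e
      rw [FΛ.G.rng_inv] at e
      obtain ⟨w, hw, t⟩ := hf.1 u hu e
      exact ⟨w, hw, t.inv hpst⟩

theorem Tr.id (hpsti : ∀ a, pst (FΩ.i a) = FΛ.i (p a)) {u : A'} (hu : Ω.IsVertex u) :
    Tr pst (FΛ.i (p u)) u u := by
  have h := Tr.arrow (pst := pst) hpsti u
  rwa [show Ω.src u = u from hu, hu.rng_eq] at h

theorem Tr.connect (hpst : IsGpdHomFun FΩ.G FΛ.G pst)
    (hpsti : ∀ a, pst (FΩ.i a) = FΛ.i (p a)) (hconn : Ω.Connected)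
    {u w : A'} (hu : Ω.IsVertex u) (hw : Ω.IsVertex w) : ∃ g, Tr pst g u w := by
  have key : u = w ∨ ∃ g, Tr pst g u w := by
    have h := hconn u w hu hw
    clear hu hw
    induction h with
    | rel a b h =>
      obtain ⟨f, rfl, rfl⟩ := h
      exact Or.inr ⟨_, (Tr.arrow hpsti f).inv hpst⟩
    | refl a => exact Or.inl rfl
    | symm a b _ ih =>
      rcases ih with rfl | ⟨g, t⟩
      · exact Or.inl rfl
      · exact Or.inr ⟨_, t.inv hpst⟩
    | trans a b c _ _ ih1 ih2 =>
      rcases ih1 with rfl | ⟨g, t⟩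
      · exact ih2
      · rcases ih2 with rfl | ⟨g', t'⟩
        · exact Or.inr ⟨_, t⟩
        · exact Or.inr ⟨_, t'.comp hpst t⟩
  rcases key with rfl | h
  · exact ⟨_, Tr.id hpsti hu⟩
  · exact h

/-- The vertex correspondence carrying `u` to `w`. -/
def Mr (pst : FΩ.B → FΛ.B) (u w z z' : A') : Prop :=
  ∃ g, Tr pst g u z ∧ Tr pst g w z'

theorem Mr.unique (hp : IsCovering Ω Λ p) (hpst : IsGpdHomFun FΩ.G FΛ.G pst)
    (hpsti : ∀ a, pst (FΩ.i a) = FΛ.i (p a)) {u w z z' z'' : A'}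
    (hw : Ω.IsVertex w) (hz' : Ω.IsVertex z')
    (hz'' : Ω.IsVertex z'') (hst : ∀ g, Tr pst g u u → Tr pst g w w)
    (h1 : Mr pst u w z z') (h2 : Mr pst u w z z'') : z' = z'' := by
  obtain ⟨g, a1, a2⟩ := h1
  obtain ⟨h, b1, b2⟩ := h2
  have t := a2.comp hpst (hst _ ((a1.inv hpst).comp hpst b1))
  rw [FΛ.G.cancel_left _ _ (by rw [a1.rng hpst hpsti, b1.rng hpst hpsti])] at t
  exact Tr.unique hp hpst hpsti hw hz' hz'' t b2

theorem exists_morph (hp : IsCovering Ω Λ p) (hconn : Ω.Connected)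
    (hpst : IsGpdHomFun FΩ.G FΛ.G pst)
    (hpsti : ∀ a, pst (FΩ.i a) = FΛ.i (p a)) {u w : A'}
    (hu : Ω.IsVertex u) (hw : Ω.IsVertex w) (huw : p u = p w)
    (hst : ∀ g, Tr pst g u u → Tr pst g w w) :
    ∃ φ : A' → A', IsKGraphHomFun Ω Ω φ ∧ (∀ a, p (φ a) = p a) ∧ φ u = w ∧
      ∀ a, Mr pst u w (Ω.src a) (Ω.src (φ a)) := by
  have ex : ∀ a, ∃ a', p a' = p a ∧ Mr pst u w (Ω.src a) (Ω.src a') := by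
    intro a
    obtain ⟨g, t⟩ := Tr.connect hpst hpsti hconn hu (Ω.vsrc a)
    obtain ⟨z, hz, t'⟩ := (Tr.lift hp hpst hpsti g).1 w hw (by
      rw [t.src hpst hpsti, huw])
    have e : FΛ.i (p (Ω.src a)) = FΛ.i (p z) := by
      rw [← t.rng hpst hpsti, t'.rng hpst hpsti]
    have e' := FΛ.i_inj (hp.hom.vertex (Ω.vsrc a)) (hp.hom.vertex hz) e
    rw [hp.hom.1] at e'
    obtain ⟨a', rfl, h⟩ := hp.src_lift z hz (p a) e'
    exact ⟨a', h, g, t, t'⟩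
  choose φ h1 h2 using ex
  have un : ∀ {z z' z''}, Ω.IsVertex z' → Ω.IsVertex z'' → Mr pst u w z z' →
      Mr pst u w z z'' → z' = z'' := fun a b => Mr.unique hp hpst hpsti hw a b hst
  have char : ∀ a a', p a' = p a → Mr pst u w (Ω.src a) (Ω.src a') → φ a = a' :=
    fun a a' e m => hp.src_inj _ _ (un (Ω.vsrc _) (Ω.vsrc _) (h2 a) m) ((h1 a).trans e.symm)
  have hr : ∀ a, Mr pst u w (Ω.rng a) (Ω.rng (φ a)) := by
    intro a
    obtain ⟨g, t, t'⟩ := h2 a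
    refine ⟨FΛ.G.comp (FΛ.i (p a)) g, (Tr.arrow hpsti a).comp hpst t, ?_⟩
    have := (Tr.arrow (pst := pst) hpsti (φ a)).comp hpst t'
    rwa [h1] at this
  refine ⟨φ, ⟨?_, ?_, ?_, ?_⟩, h1, ?_, h2⟩
  · intro a
    apply char
    · rw [hp.hom.1, hp.hom.1, h1]
    · rw [Ω.src_src, Ω.src_src]; exact h2 a
  · intro a
    apply char
    · rw [hp.hom.2.1, hp.hom.2.1, h1]
    · rw [Ω.src_rng, Ω.src_rng]; exact hr a
  · intro a b h
    have m := h2 a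
    rw [h] at m
    have e := un (Ω.vsrc _) (Ω.vrng _) m (hr b)
    apply char
    · rw [hp.hom.2.2.1 _ _ e, hp.hom.2.2.1 _ _ h, h1, h1]
    · rw [Ω.src_comp _ _ e, Ω.src_comp _ _ h]; exact h2 b
  · intro a
    rw [← hp.hom.2.2.2, h1, hp.hom.2.2.2]
  · apply char _ _ huw.symm
    rw [show Ω.src u = u from hu, show Ω.src w = w from hw]
    refine ⟨_, Tr.id hpsti hu, ?_⟩
    rw [huw]
    exact Tr.id hpsti hw

theorem exists_aut (hp : IsCovering Ω Λ p) (hconn : Ω.Connected)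
    (hpst : IsGpdHomFun FΩ.G FΛ.G pst)
    (hpsti : ∀ a, pst (FΩ.i a) = FΛ.i (p a)) {u w : A'}
    (hu : Ω.IsVertex u) (hw : Ω.IsVertex w) (huw : p u = p w)
    (hst : ∀ g, Tr pst g u u ↔ Tr pst g w w) :
    ∃ φ, IsCoveringAut Ω Λ p φ ∧ φ u = w := by
  obtain ⟨φ, a1, a2, a3, a4⟩ :=
    exists_morph hp hconn hpst hpsti hu hw huw (fun g => (hst g).1)
  obtain ⟨ψ, b1, b2, b3, b4⟩ :=
    exists_morph hp hconn hpst hpsti hw hu huw.symm (fun g => (hst g).2)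
  refine ⟨φ, ⟨Function.bijective_iff_has_inverse.2 ⟨ψ, fun a => ?_, fun a => ?_⟩, a1, a2⟩, a3⟩
  · apply hp.src_inj
    · obtain ⟨g, t, t'⟩ := a4 a
      exact Mr.unique hp hpst hpsti hu (Ω.vsrc _) (Ω.vsrc _) (fun g => (hst g).2)
        (b4 (φ a)) ⟨g, t', t⟩
    · rw [b2, a2]
  · apply hp.src_inj
    · obtain ⟨g, t, t'⟩ := b4 a
      exact Mr.unique hp hpst hpsti hw (Ω.vsrc _) (Ω.vsrc _) (fun g => (hst g).1)
        (a4 (ψ a)) ⟨g, t', t⟩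
    · rw [a2, b2]

theorem Tr.aut (hpst : IsGpdHomFun FΩ.G FΛ.G pst)
    (hpsti : ∀ a, pst (FΩ.i a) = FΛ.i (p a)) {φ : A' → A'}
    (hφ : IsCoveringAut Ω Λ p φ) {g : FΛ.B} {u w : A'} (h : Tr pst g u w) :
    Tr pst g (φ u) (φ w) := by
  obtain ⟨-, hφ, hφp⟩ := hφ
  have hF : IsFunctorToGpdFun Ω FΩ.G (fun a => FΩ.i (φ a)) := by
    refine ⟨fun a => ?_, fun a => ?_, fun a b e => ?_⟩
    · simp only [hφ.1, FΩ.i_hom.1]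
    · simp only [hφ.2.1, FΩ.i_hom.2.1]
    · simp only [hφ.2.2.1 _ _ e]
      exact FΩ.i_hom.2.2 _ _ (by rw [← hφ.1, ← hφ.2.1, e])
  obtain ⟨F', ⟨hF', hFi⟩, -⟩ := FΩ.univ _ _ hF
  have hP : IsFunctorToGpdFun Ω FΛ.G (fun a => pst (FΩ.i a)) := by
    refine ⟨fun a => ?_, fun a => ?_, fun a b e => ?_⟩
    · simp only [hpst.1, FΩ.i_hom.1]
    · simp only [hpst.2.1, FΩ.i_hom.2.1]
    · simp only [FΩ.i_hom.2.2 _ _ e]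
      exact hpst.2.2 _ _ (by rw [← FΩ.i_hom.1, ← FΩ.i_hom.2.1, e])
  have key : (fun b => pst (F' b)) = pst := by
    refine (FΩ.univ FΛ.G _ hP).unique ⟨⟨fun a => ?_, fun a => ?_, fun a b e => ?_⟩, ?_⟩
      ⟨hpst, fun _ => rfl⟩
    · simp only [hpst.1, hF'.1]
    · simp only [hpst.2.1, hF'.2.1]
    · simp only [hF'.2.2 _ _ e]
      exact hpst.2.2 _ _ (by rw [← hF'.1, ← hF'.2.1, e])
    · intro a
      rw [hFi, hpsti, hpsti, hφp]
  obtain ⟨b, b1, b2, rfl⟩ := h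
  exact ⟨F' b, by rw [← hF'.1, b1, hFi], by rw [← hF'.2.1, b2, hFi], congrFun key b⟩

theorem mem_image_pi1 (g : FΛ.B) (v : A') : g ∈ pst '' FΩ.pi1 v ↔ Tr pst g v v := by
  constructor
  · rintro ⟨b, ⟨h1, h2⟩, h⟩
    exact ⟨b, h1, h2, h⟩
  · rintro ⟨b, h1, h2, h⟩
    exact ⟨b, ⟨h1, h2⟩, h⟩

end

/-- For a connected covering `p : Ω → Λ`, `x ∈ Λ⁰` and
`v ∈ p⁻¹(x)`, the following are equivalent: (i) `p₊π(Ω,v)` is normal in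
`π(Λ,x)`; (ii) `Aut(Ω,p)` acts transitively on `p⁻¹(x)`; (iii) the induced
covering `Ω/Aut(Ω,p) → Λ` is an isomorphism; (iv) `(Ω,p)` is isomorphic to
the quotient covering `Ω → Ω/Aut(Ω,p)`.  The quotient `Ω/Aut(Ω,p)` is given
abstractly as a `k`-graph `Q` together with a surjective `k`-graph morphism
`π` whose fibers are exactly the `Aut(Ω,p)`-orbits, and `qbar : Q → Λ` is the
induced map with `qbar ∘ π = p`. -/
theorem covering_normal_tfae {k : ℕ} {A A' Qc : Type}
    (Λ : KGraphStruct k A) (Ω : KGraphStruct k A') (Q : KGraphStruct k Qc)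
    (FΛ : FundamentalGroupoid Λ) (FΩ : FundamentalGroupoid Ω)
    (p : A' → A) (hp : IsCovering Ω Λ p) (hconn : Ω.Connected)
    (pst : FΩ.B → FΛ.B) (hpst : IsGpdHomFun FΩ.G FΛ.G pst)
    (hpsti : ∀ a, pst (FΩ.i a) = FΛ.i (p a))
    (x : A) (hx : Λ.IsVertex x) (v : A') (hv : Ω.IsVertex v) (hpv : p v = x)
    (π : A' → Qc) (hπ : IsKGraphHomFun Ω Q π) (hπs : Function.Surjective π)
    (hπfib : ∀ a b, π a = π b ↔ ∃ φ, IsCoveringAut Ω Λ p φ ∧ φ a = b)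
    (qbar : Qc → A) (hqbar : IsKGraphHomFun Q Λ qbar)
    (hqcomm : ∀ a, qbar (π a) = p a) :
    (FΛ.G.IsNormalAt (FΛ.i x) (pst '' FΩ.pi1 v) ↔
      (∀ u w, Ω.IsVertex u → Ω.IsVertex w → p u = x → p w = x →
        ∃ φ, IsCoveringAut Ω Λ p φ ∧ φ u = w)) ∧
    ((∀ u w, Ω.IsVertex u → Ω.IsVertex w → p u = x → p w = x →
        ∃ φ, IsCoveringAut Ω Λ p φ ∧ φ u = w) ↔
      Function.Bijective qbar) ∧
    (Function.Bijective qbar ↔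
      ∃ ψ : A → Qc, Function.Bijective ψ ∧ IsKGraphHomFun Λ Q ψ ∧
        ∀ a, ψ (p a) = π a) := by
  refine ⟨⟨?_, ?_⟩, ⟨?_, ?_⟩, ⟨?_, ?_⟩⟩
  · intro hN
    have hN' : ∀ h g, FΛ.G.src h = FΛ.i x → FΛ.G.rng h = FΛ.i x → Tr pst g v v →
        Tr pst (FΛ.G.comp (FΛ.G.comp h g) (FΛ.G.inv h)) v v := by
      intro h g h1 h2 t
      exact (mem_image_pi1 _ _).1 (hN h h1 h2 g ((mem_image_pi1 _ _).2 t))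
    have key : ∀ w, Ω.IsVertex w → p w = x → ∀ g, Tr pst g v v ↔ Tr pst g w w := by
      intro w hw hpw g
      obtain ⟨h, t⟩ := Tr.connect (pst := pst) hpst hpsti hconn hv hw
      have s1 : FΛ.G.src h = FΛ.i x := by rw [t.src hpst hpsti, hpv]
      have s2 : FΛ.G.rng h = FΛ.i x := by rw [t.rng hpst hpsti, hpw]
      constructor
      · intro tg
        have t1 := hN' (FΛ.G.inv h) g (by rw [FΛ.G.src_inv, s2]) (by rw [FΛ.G.rng_inv, s1]) tg
        rw [FΛ.G.inv_inv'] at t1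
        have t2 := (t.comp hpst t1).comp hpst (t.inv hpst)
        rwa [FΛ.G.conj_conj _ _ (by rw [tg.src hpst hpsti, s2, hpv])
          (by rw [tg.rng hpst hpsti, s2, hpv])] at t2
      · intro tg
        have t1 := ((t.inv hpst).comp hpst tg).comp hpst t
        have t2 := hN' h _ s1 s2 t1
        rwa [FΛ.G.conj_conj _ _ (by rw [tg.src hpst hpsti, s2, hpw])
          (by rw [tg.rng hpst hpsti, s2, hpw])] at t2
    intro u w hu hw hpu hpw
    exact exists_aut hp hconn hpst hpsti hu hw (hpu.trans hpw.symm)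
      (fun g => (key u hu hpu g).symm.trans (key w hw hpw g))
  · intro hT h h1 h2 g hg
    rw [mem_image_pi1] at hg ⊢
    obtain ⟨w, hw, t⟩ := (Tr.lift hp hpst hpsti h).2 v hv (by rw [h2, hpv])
    have e : p w = x := FΛ.i_inj (hp.hom.vertex hw) hx (by rw [← h1, t.src hpst hpsti])
    obtain ⟨φ, hφ, rfl⟩ := hT v w hv hw hpv e
    exact (t.comp hpst (hg.aut hpst hpsti hφ)).comp hpst (t.inv hpst)
  · intro hT
    have step : ∀ u, Ω.IsVertex u → ∀ w, Ω.IsVertex w → p w = p u →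
        ∃ φ, IsCoveringAut Ω Λ p φ ∧ φ u = w := by
      intro u hu
      have main : (∀ w, Ω.IsVertex w → p w = p v → ∃ φ, IsCoveringAut Ω Λ p φ ∧ φ v = w) ↔
          (∀ w, Ω.IsVertex w → p w = p u → ∃ φ, IsCoveringAut Ω Λ p φ ∧ φ u = w) := by
        have h := hconn v u hv hu
        clear hu hT hpv hv
        induction h with
        | rel a b h =>
          obtain ⟨f, rfl, rfl⟩ := h
          constructor
          · intro H w hw e
            obtain ⟨f', rfl, hf'⟩ := hp.src_lift w hw (p f) (by rw [e, hp.hom.1])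
            obtain ⟨φ, hφ, hh⟩ := H (Ω.rng f') (Ω.vrng _) (by
              rw [hp.hom.2.1, hp.hom.2.1, hf'])
            refine ⟨φ, hφ, ?_⟩
            rw [hφ.2.1.1, hp.rng_inj (φ f) f' (by rw [← hφ.2.1.2.1, hh]) (by
              rw [hφ.2.2, hf'])]
          · intro H w hw e
            obtain ⟨f', rfl, hf'⟩ := hp.rng_lift w hw (p f) (by rw [e, hp.hom.2.1])
            obtain ⟨φ, hφ, hh⟩ := H (Ω.src f') (Ω.vsrc _) (by
              rw [hp.hom.1, hp.hom.1, hf'])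
            refine ⟨φ, hφ, ?_⟩
            rw [hφ.2.1.2.1, hp.src_inj (φ f) f' (by rw [← hφ.2.1.1, hh]) (by
              rw [hφ.2.2, hf'])]
        | refl a => exact Iff.rfl
        | symm a b _ ih => exact ih.symm
        | trans a b c _ _ ih1 ih2 => exact ih1.trans ih2
      exact main.1 (fun w hw e => hT v w hv hw hpv (e.trans hpv))
    constructor
    · intro y z hyz
      obtain ⟨a, rfl⟩ := hπs y
      obtain ⟨b, rfl⟩ := hπs z
      rw [hqcomm, hqcomm] at hyz
      obtain ⟨φ, hφ, e⟩ := step (Ω.src a) (Ω.vsrc a) (Ω.src b) (Ω.vsrc b) (by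
        rw [hp.hom.1, hp.hom.1, hyz])
      refine (hπfib a b).2 ⟨φ, hφ, hp.src_inj _ _ ?_ ?_⟩
      · rw [← hφ.2.1.1, e]
      · rw [hφ.2.2, hyz]
    · intro l
      obtain ⟨a, rfl⟩ := hp.surj l
      exact ⟨π a, hqcomm a⟩
  · intro hb u w _ _ hpu hpw
    exact (hπfib u w).1 (hb.1 (by rw [hqcomm, hqcomm, hpu, hpw]))
  · intro hb
    obtain ⟨ψ, l, r⟩ := Function.bijective_iff_has_inverse.1 hb
    have hψ : ∀ a, ψ (p a) = π a := fun a => by rw [← hqcomm, l]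
    refine ⟨ψ, Function.bijective_iff_has_inverse.2 ⟨qbar, r, l⟩, ⟨?_, ?_, ?_, ?_⟩, hψ⟩
    · intro a
      apply hb.1
      rw [hqbar.1, r, r]
    · intro a
      apply hb.1
      rw [hqbar.2.1, r, r]
    · intro a b h
      apply hb.1
      rw [hqbar.2.2.1 _ _ ?_, r, r, r]
      apply hb.1
      rw [hqbar.1, hqbar.2.1, r, r, h]
    · intro a
      rw [← hqbar.2.2.2, r]
  · rintro ⟨ψ, hψ, -, hc⟩
    have r : ∀ l, qbar (ψ l) = l := by
      intro l
      obtain ⟨a, rfl⟩ := hp.surj l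
      rw [hc, hqcomm]
    refine Function.bijective_iff_has_inverse.2 ⟨ψ, fun y => ?_, r⟩
    obtain ⟨l, rfl⟩ := hψ.2 y
    rw [r]

end KGraphCovering
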